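/- Let Q be a tree quiver and V any representation of Q over a field K. Then rkf(V) is isomorphic to a direct sum of copies of the identity representation 𝟙_Q, and rkf(V) is isomorphic to a direct summand of V: there exists a representation U of Q with V ≅ rkf(V) ⊕ U. -/

import Mathlib

open Submodule

section Defs

variable {K : Type} [Field K]
variable {Q₀ Q₁ : Type} (tl hd : Q₁ → Q₀)
variable (Vx : Q₀ → Type) [∀ x, AddCommGroup (Vx x)] [∀ x, Module K (Vx x)]
variable (Va : ∀ a : Q₁, Vx (tl a) →ₗ[K] Vx (hd a))

/-- `U` is a subrepresentation of the representation `(Vx, Va)`. -/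
def IsSubrep (U : ∀ x, Submodule K (Vx x)) : Prop :=
  ∀ a : Q₁, (U (tl a)).map (Va a) ≤ U (hd a)

/-- `U` is an epimorphic subrepresentation: `V_a(U_{ta}) = U_{ha}` for every arrow. -/
def IsEpiSub (U : ∀ x, Submodule K (Vx x)) : Prop :=
  ∀ a : Q₁, (U (tl a)).map (Va a) = U (hd a)

/-- `N` is a coclosed subrepresentation: it is a subrepresentation and
`V_a⁻¹(N_{ha}) ⊆ N_{ta}` for every arrow. -/
def IsCoclosedSub (N : ∀ x, Submodule K (Vx x)) : Prop :=
  IsSubrep tl hd Vx Va N ∧ ∀ a : Q₁, (N (hd a)).comap (Va a) ≤ N (tl a)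

/-- `Γ(V)`, the sum of all epimorphic subrepresentations. -/
def Gamma (x : Q₀) : Submodule K (Vx x) :=
  ⨆ U : {U : ∀ y, Submodule K (Vx y) // IsEpiSub tl hd Vx Va U}, U.1 x

/-- `Δ(V)`, the intersection of all coclosed subrepresentations. -/
def Delta (x : Q₀) : Submodule K (Vx x) :=
  ⨅ N : {N : ∀ y, Submodule K (Vx y) // IsCoclosedSub tl hd Vx Va N}, N.1 x

lemma le_gamma {U : ∀ y, Submodule K (Vx y)} (hU : IsEpiSub tl hd Vx Va U) (x : Q₀) :
    U x ≤ Gamma tl hd Vx Va x :=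
  le_iSup (fun (W : {U // IsEpiSub tl hd Vx Va U}) => W.1 x) ⟨U, hU⟩

lemma delta_le {N : ∀ y, Submodule K (Vx y)} (hN : IsCoclosedSub tl hd Vx Va N) (x : Q₀) :
    Delta tl hd Vx Va x ≤ N x :=
  iInf_le (fun (W : {N // IsCoclosedSub tl hd Vx Va N}) => W.1 x) ⟨N, hN⟩

lemma gamma_epi : IsEpiSub tl hd Vx Va (Gamma tl hd Vx Va) := by
  intro a
  apply le_antisymm
  · rw [Gamma, Submodule.map_iSup]
    refine iSup_le fun U => ?_
    rw [U.2 a]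
    exact le_gamma tl hd Vx Va U.2 (hd a)
  · refine iSup_le fun U => ?_
    rw [← U.2 a]
    exact Submodule.map_mono (le_gamma tl hd Vx Va U.2 (tl a))

lemma gamma_subrep : IsSubrep tl hd Vx Va (Gamma tl hd Vx Va) :=
  fun a => le_of_eq (gamma_epi tl hd Vx Va a)

lemma delta_subrep : IsSubrep tl hd Vx Va (Delta tl hd Vx Va) := by
  intro a
  have : ∀ N : {N // IsCoclosedSub tl hd Vx Va N},
      (Delta tl hd Vx Va (tl a)).map (Va a) ≤ N.1 (hd a) :=
    fun N => le_trans (Submodule.map_mono (delta_le tl hd Vx Va N.2 (tl a))) (N.2.1 a)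
  exact le_iInf this

/-- `Γ(V) + Δ(V)` pointwise. -/
abbrev GD (x : Q₀) : Submodule K (Vx x) := Gamma tl hd Vx Va x ⊔ Delta tl hd Vx Va x

/-- `Δ(V)`, seen inside `Γ(V) + Δ(V)`. -/
abbrev rkfDen (x : Q₀) : Submodule K (GD tl hd Vx Va x) :=
  (Delta tl hd Vx Va x).comap (GD tl hd Vx Va x).subtype

/-- The vertex spaces `(Γ(V)_x + Δ(V)_x)/Δ(V)_x` of the global tensor functor. -/
abbrev rkfSpace (x : Q₀) : Type :=
  GD tl hd Vx Va x ⧸ rkfDen tl hd Vx Va x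

lemma gd_mapsTo (a : Q₁) : ∀ v ∈ GD tl hd Vx Va (tl a), Va a v ∈ GD tl hd Vx Va (hd a) := by
  intro v hv
  have : (GD tl hd Vx Va (tl a)).map (Va a) ≤ GD tl hd Vx Va (hd a) := by
    rw [Submodule.map_sup]
    exact sup_le_sup (gamma_subrep tl hd Vx Va a) (delta_subrep tl hd Vx Va a)
  exact this ⟨v, hv, rfl⟩

/-- The arrow maps of the global tensor functor, induced by the `V_a`. -/
def rkfMap (a : Q₁) : rkfSpace tl hd Vx Va (tl a) →ₗ[K] rkfSpace tl hd Vx Va (hd a) :=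
  Submodule.liftQ _
    ((rkfDen tl hd Vx Va (hd a)).mkQ ∘ₗ (Va a).restrict (gd_mapsTo tl hd Vx Va a))
    (by
      intro v hv
      simp only [LinearMap.mem_ker, LinearMap.comp_apply, Submodule.mkQ_apply,
        Submodule.Quotient.mk_eq_zero]
      have hv' : (v : Vx (tl a)) ∈ Delta tl hd Vx Va (tl a) := hv
      show (Va a) (v : Vx (tl a)) ∈ Delta tl hd Vx Va (hd a)
      exact delta_subrep tl hd Vx Va a ⟨(v : Vx (tl a)), hv', rfl⟩)

/-- Isomorphism of quiver representations. -/
def RepIso (Wx : Q₀ → Type) [∀ x, AddCommGroup (Wx x)] [∀ x, Module K (Wx x)]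
    (Wa : ∀ a : Q₁, Wx (tl a) →ₗ[K] Wx (hd a)) : Prop :=
  ∃ φ : ∀ x, Vx x ≃ₗ[K] Wx x, ∀ (a : Q₁) (v : Vx (tl a)), φ (hd a) (Va a v) = Wa a (φ (tl a) v)

end Defs

/-!
The arrow maps of `rkf(V)` are bijective. Choosing an isomorphism `rkf(V)_r ≅ W` at one vertex `r`
and transporting it along the arrows, in either direction, therefore trivializes `rkf(V)`; on a tree
every vertex is reached in a unique way, so no compatibility condition arises.

For the splitting, `rkf(V)` is the image of `Γ(V) → V → V/Δ(V)`. The arrow maps of `Γ(V)` are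
surjective and those of `V/Δ(V)` are injective, which is exactly what makes a section of
`Γ(V) ↠ rkf(V)` and a retraction of `rkf(V) ↪ V/Δ(V)` transportable along an arrow in both
directions. The composites `rkf(V) → Γ(V) → V` and `V → V/Δ(V) → rkf(V)` then split `rkf(V)` off.
-/

section Arborescence

theorem exists_compatible_family_on_arborescence {V : Type*} [Quiver V] [Quiver.Arborescence V]
    {D : V → Type*} (R : ∀ ⦃u v : V⦄, (u ⟶ v) → D u → D v → Prop)
    (hR : ∀ ⦃u v : V⦄ (e : u ⟶ v) (d : D u), ∃ d' : D v, R e d d') (d₀ : D (Quiver.root V)) :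
    ∃ s : ∀ v, D v, ∀ ⦃u v : V⦄ (e : u ⟶ v), R e (s u) (s v) := by
  choose next hnext using hR
  let along {v : V} (p : Quiver.Path (Quiver.root V) v) : D v :=
    p.rec d₀ fun _ e d => next e d
  refine ⟨fun v => along default, fun u v e => ?_⟩
  have hpath : (default : Quiver.Path (Quiver.root V) v) = Quiver.Path.cons default e :=
    Subsingleton.elim _ _
  simp only [hpath]
  exact hnext e _

end Arborescence

section TreeQuiver

variable {Q₀ Q₁ : Type*} {tl hd : Q₁ → Q₀}

/-- Adjacency in the underlying undirected multigraph of the quiver `tl hd : Q₁ → Q₀`. -/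
def ArrowAdj (tl hd : Q₁ → Q₀) (u v : Q₀) : Prop :=
  ∃ a : Q₁, (tl a = u ∧ hd a = v) ∨ (hd a = u ∧ tl a = v)

/-- Adjacency in the underlying undirected multigraph after deleting the arrow `a`. -/
abbrev ArrowAdjAvoiding (tl hd : Q₁ → Q₀) (a : Q₁) : Q₀ → Q₀ → Prop :=
  ArrowAdj (fun b : {b : Q₁ // b ≠ a} => tl b) (fun b => hd b)

/-- A possibly infinite tree quiver. Acyclicity is expressed by requiring every arrow to be a bridge
of the underlying undirected multigraph, which also excludes loops and parallel arrows. -/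
structure IsTreeQuiver (tl hd : Q₁ → Q₀) : Prop where
  nonempty : Nonempty Q₀
  connected : ∀ x y : Q₀, Relation.ReflTransGen (ArrowAdj tl hd) x y
  bridge : ∀ a : Q₁, ¬ Relation.ReflTransGen (ArrowAdjAvoiding tl hd a) (tl a) (hd a)

instance : Std.Symm (ArrowAdj tl hd) :=
  ⟨fun _ _ ⟨a, ha⟩ => ⟨a, ha.symm.imp And.symm And.symm⟩⟩

theorem card_vertices_le_card_arrows_add_one [Finite Q₁] [Nonempty Q₀]
    (hconn : ∀ x y : Q₀, Relation.ReflTransGen (ArrowAdj tl hd) x y) :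
    Nat.card Q₀ ≤ Nat.card Q₁ + 1 := by
  let edge (a : Q₁) : Sym2 Q₀ := s(tl a, hd a)
  let G := SimpleGraph.fromEdgeSet (Set.range edge)
  have hG : G.Connected := by
    refine (SimpleGraph.connected_iff _).2 ⟨fun x y => ?_, inferInstance⟩
    rw [SimpleGraph.reachable_fromEdgeSet_eq_reflTransGen_toRel]
    refine Relation.ReflTransGen.mono ?_ _ _ (hconn x y)
    rintro _ _ ⟨a, ⟨rfl, rfl⟩ | ⟨rfl, rfl⟩⟩
    exacts [⟨a, rfl⟩, ⟨a, Sym2.eq_swap⟩]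
  have hedges : G.edgeSet ⊆ Set.range edge := by
    rw [SimpleGraph.edgeSet_fromEdgeSet]
    exact Set.sdiff_subset
  calc Nat.card Q₀ ≤ Nat.card G.edgeSet + 1 := hG.card_vert_le_card_edgeSet_add_one
    _ ≤ Nat.card (Set.range edge) + 1 := by
      gcongr
      exact Nat.card_mono (Set.finite_range edge) hedges
    _ ≤ Nat.card Q₁ + 1 := by
      gcongr
      exact Finite.card_range_le edge

theorem IsTreeQuiver.of_card [Fintype Q₀] [Fintype Q₁]
    (hconn : ∀ x y : Q₀, Relation.ReflTransGen (ArrowAdj tl hd) x y)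
    (hcard : Fintype.card Q₀ = Fintype.card Q₁ + 1) : IsTreeQuiver tl hd := by
  have hne : Nonempty Q₀ := Fintype.card_pos_iff.1 (by omega)
  refine ⟨hne, hconn, fun a hcycle => ?_⟩
  have hdetour : ArrowAdj tl hd ≤ Relation.ReflTransGen (ArrowAdjAvoiding tl hd a) := by
    rintro _ _ ⟨b, hb⟩
    by_cases hba : b = a
    · subst hba
      obtain ⟨rfl, rfl⟩ | ⟨rfl, rfl⟩ := hb
      exacts [hcycle, symm hcycle]
    · exact .single ⟨⟨b, hba⟩, hb⟩
  have hcard_le : Nat.card Q₀ ≤ Nat.card {b : Q₁ // b ≠ a} + 1 :=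
    card_vertices_le_card_arrows_add_one fun x y =>
      Relation.ReflTransGen.lift' id hdetour _ _ (hconn x y)
  have hcard_lt : Nat.card {b : Q₁ // b ≠ a} < Nat.card Q₁ :=
    Finite.card_subtype_lt (x := a) (by simp)
  rw [Nat.card_eq_fintype_card] at hcard_le
  rw [Nat.card_eq_fintype_card (α := Q₁)] at hcard_lt
  omega

/-- A traversal of an arrow of the quiver `tl hd : Q₁ → Q₀` in one of its two directions. -/
inductive ArrowStep (tl hd : Q₁ → Q₀) : Q₀ → Q₀ → Type _
  | forward (a : Q₁) : ArrowStep tl hd (tl a) (hd a)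
  | backward (a : Q₁) : ArrowStep tl hd (hd a) (tl a)

/-- The vertex set `Q₀` with the quiver structure in which every arrow may be traversed in both
directions; it carries the spanning tree used to transport data from a root to all vertices. -/
def Traversal {Q₀ Q₁ : Type*} (_tl _hd : Q₁ → Q₀) : Type _ := Q₀

instance : Quiver (Traversal tl hd) := ⟨ArrowStep tl hd⟩

theorem IsTreeQuiver.rootedConnected (hQ : IsTreeQuiver tl hd) (r : Traversal tl hd) :
    Quiver.RootedConnected r where
  nonempty_path x := by
    induction hQ.connected r x with
    | refl => exact ⟨.nil⟩
    | tail _ hadj ih =>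
      obtain ⟨p⟩ := ih
      obtain ⟨a, ⟨rfl, rfl⟩ | ⟨rfl, rfl⟩⟩ := hadj
      exacts [⟨p.cons (ArrowStep.forward a)⟩, ⟨p.cons (ArrowStep.backward a)⟩]

theorem reflTransGen_arrowAdjAvoiding_of_path {T : WideSubquiver (Traversal tl hd)} {a : Q₁}
    (hforward : ArrowStep.forward a ∉ T (tl a) (hd a))
    (hbackward : ArrowStep.backward a ∉ T (hd a) (tl a)) {x y : T} (p : Quiver.Path x y) :
    Relation.ReflTransGen (ArrowAdjAvoiding tl hd a) x y := by
  induction p with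
  | nil => exact .refl
  | cons _ e ih =>
    refine ih.tail ?_
    obtain ⟨b | b, hb⟩ := e
    · exact ⟨⟨b, by rintro rfl; exact hforward hb⟩, .inl ⟨rfl, rfl⟩⟩
    · exact ⟨⟨b, by rintro rfl; exact hbackward hb⟩, .inr ⟨rfl, rfl⟩⟩

theorem IsTreeQuiver.forward_or_backward_mem_of_arborescence (hQ : IsTreeQuiver tl hd)
    (T : WideSubquiver (Traversal tl hd)) [Quiver.Arborescence T] (a : Q₁) :
    ArrowStep.forward a ∈ T (tl a) (hd a) ∨ ArrowStep.backward a ∈ T (hd a) (tl a) := by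
  by_contra! hmem
  have hpath (x : T) :
      Relation.ReflTransGen (ArrowAdjAvoiding tl hd a) (Quiver.root T) x :=
    reflTransGen_arrowAdjAvoiding_of_path hmem.1 hmem.2 default
  exact hQ.bridge a ((symm (hpath (tl a))).trans (hpath (hd a)))

theorem IsTreeQuiver.exists_compatible_family_of_subtree (hQ : IsTreeQuiver tl hd)
    (T : WideSubquiver (Traversal tl hd)) [Quiver.Arborescence T] {D : Q₀ → Type*}
    (R : ∀ a, D (tl a) → D (hd a) → Prop) (hforward : ∀ a d, ∃ e, R a d e)
    (hbackward : ∀ a e, ∃ d, R a d e) (d₀ : D (Quiver.root T)) :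
    ∃ s : ∀ x, D x, ∀ a, R a (s (tl a)) (s (hd a)) := by
  let stepRel ⦃u v : T⦄ (e : u ⟶ v) : D u → D v → Prop :=
    match e.1 with
    | .forward a => fun d d' => R a d d'
    | .backward a => fun d d' => R a d' d
  obtain ⟨s, hs⟩ := exists_compatible_family_on_arborescence (V := T) (D := D) stepRel
    (by
      rintro _ _ ⟨a | a, _⟩ d
      exacts [hforward a d, hbackward a d]) d₀
  refine ⟨s, fun a => ?_⟩
  obtain ha | ha := hQ.forward_or_backward_mem_of_arborescence T a
  exacts [hs ⟨.forward a, ha⟩, hs ⟨.backward a, ha⟩]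

theorem IsTreeQuiver.exists_compatible_family (hQ : IsTreeQuiver tl hd) {D : Q₀ → Type*}
    (R : ∀ a, D (tl a) → D (hd a) → Prop) (hforward : ∀ a d, ∃ e, R a d e)
    (hbackward : ∀ a e, ∃ d, R a d e) {r : Q₀} (d₀ : D r) :
    ∃ s : ∀ x, D x, ∀ a, R a (s (tl a)) (s (hd a)) :=
  have := hQ.rootedConnected r
  letI := Quiver.geodesicArborescence (V := Traversal tl hd) r
  hQ.exists_compatible_family_of_subtree
    (Quiver.geodesicSubtree (V := Traversal tl hd) r) R hforward hbackward d₀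

end TreeQuiver

section CommSquare

variable {R A B C D : Type*} [Ring R] [AddCommGroup A] [AddCommGroup B] [AddCommGroup C]
  [AddCommGroup D] [Module R A] [Module R B] [Module R C] [Module R D]
  {α : A →ₗ[R] C} {β : B →ₗ[R] D}

theorem exists_section_pushforward {p : A →ₗ[R] B} {q : C →ₗ[R] D} (hβ : Function.Bijective β)
    (hcomm : q ∘ₗ α = β ∘ₗ p) {s : B →ₗ[R] A} (hs : p ∘ₗ s = .id) :
    ∃ t : D →ₗ[R] C, q ∘ₗ t = .id ∧ α ∘ₗ s = t ∘ₗ β := by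
  obtain ⟨β, rfl⟩ : ∃ e : B ≃ₗ[R] D, e.toLinearMap = β := ⟨.ofBijective β hβ, rfl⟩
  simp only [LinearMap.ext_iff, LinearMap.comp_apply, LinearMap.id_apply] at hcomm hs ⊢
  exact ⟨α ∘ₗ s ∘ₗ β.symm, by simp [hcomm, hs], by simp⟩

theorem exists_section_pullback {p : A →ₗ[R] B} {q : C →ₗ[R] D} {σ : C →ₗ[R] A}
    (hσ : α ∘ₗ σ = .id) (hβ : Function.Injective β) (hcomm : q ∘ₗ α = β ∘ₗ p) {t : D →ₗ[R] C}
    (ht : q ∘ₗ t = .id) : ∃ s : B →ₗ[R] A, p ∘ₗ s = .id ∧ α ∘ₗ s = t ∘ₗ β := by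
  simp only [LinearMap.ext_iff, LinearMap.comp_apply, LinearMap.id_apply] at hσ hcomm ht ⊢
  exact ⟨σ ∘ₗ t ∘ₗ β, fun b => hβ (by simp [← hcomm, hσ, ht]), by simp [hσ]⟩

theorem exists_retraction_pushforward {i : B →ₗ[R] A} {j : D →ₗ[R] C} {τ : C →ₗ[R] A}
    (hτ : τ ∘ₗ α = .id) (hβ : Function.Surjective β) (hcomm : j ∘ₗ β = α ∘ₗ i) {s : A →ₗ[R] B}
    (hs : s ∘ₗ i = .id) : ∃ t : C →ₗ[R] D, t ∘ₗ j = .id ∧ β ∘ₗ s = t ∘ₗ α := by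
  simp only [LinearMap.ext_iff, LinearMap.comp_apply, LinearMap.id_apply] at hτ hcomm hs ⊢
  exact ⟨β ∘ₗ s ∘ₗ τ, hβ.forall.2 fun b => by simp [hcomm, hτ, hs], by simp [hτ]⟩

theorem exists_retraction_pullback {i : B →ₗ[R] A} {j : D →ₗ[R] C} (hβ : Function.Bijective β)
    (hcomm : j ∘ₗ β = α ∘ₗ i) {t : C →ₗ[R] D} (ht : t ∘ₗ j = .id) :
    ∃ s : A →ₗ[R] B, s ∘ₗ i = .id ∧ β ∘ₗ s = t ∘ₗ α := by
  obtain ⟨β, rfl⟩ : ∃ e : B ≃ₗ[R] D, e.toLinearMap = β := ⟨.ofBijective β hβ, rfl⟩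
  simp only [LinearMap.ext_iff, LinearMap.comp_apply, LinearMap.id_apply,
    LinearEquiv.coe_coe] at hcomm ht ⊢
  exact ⟨β.symm ∘ₗ t ∘ₗ α, by simp [← hcomm, ht], by simp⟩

end CommSquare

section Splitting

variable {K : Type*} [DivisionRing K] {Q₀ Q₁ : Type*} {tl hd : Q₁ → Q₀} {A B : Q₀ → Type*}
  [∀ x, AddCommGroup (A x)] [∀ x, Module K (A x)] [∀ x, AddCommGroup (B x)] [∀ x, Module K (B x)]
  {Aa : ∀ a : Q₁, A (tl a) →ₗ[K] A (hd a)} {Ba : ∀ a : Q₁, B (tl a) →ₗ[K] B (hd a)}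

/-- The family of linear maps `f` is a morphism from the representation `(A, Aa)` to `(B, Ba)`. -/
def IsRepHom (Aa : ∀ a : Q₁, A (tl a) →ₗ[K] A (hd a)) (Ba : ∀ a : Q₁, B (tl a) →ₗ[K] B (hd a))
    (f : ∀ x, A x →ₗ[K] B x) : Prop :=
  ∀ a, Ba a ∘ₗ f (tl a) = f (hd a) ∘ₗ Aa a

theorem IsTreeQuiver.exists_section (hQ : IsTreeQuiver tl hd) {p : ∀ x, A x →ₗ[K] B x}
    (hp : IsRepHom Aa Ba p) (hp_surj : ∀ x, Function.Surjective (p x))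
    (hA : ∀ a, Function.Surjective (Aa a)) (hB : ∀ a, Function.Bijective (Ba a)) :
    ∃ s : ∀ x, B x →ₗ[K] A x, IsRepHom Ba Aa s ∧ ∀ x, p x ∘ₗ s x = .id := by
  obtain ⟨r⟩ := hQ.nonempty
  obtain ⟨s₀, hs₀⟩ := (p r).exists_rightInverse_of_surjective (LinearMap.range_eq_top.2 (hp_surj r))
  obtain ⟨s, hs⟩ := hQ.exists_compatible_family
    (D := fun x => {s : B x →ₗ[K] A x // p x ∘ₗ s = .id})
    (fun a s t => Aa a ∘ₗ s.1 = t.1 ∘ₗ Ba a)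
    (fun a s => by
      obtain ⟨t, ht, hst⟩ := exists_section_pushforward (hB a) (hp a).symm s.2
      exact ⟨⟨t, ht⟩, hst⟩)
    (fun a t => by
      obtain ⟨σ, hσ⟩ := (Aa a).exists_rightInverse_of_surjective (LinearMap.range_eq_top.2 (hA a))
      obtain ⟨s, hs, hst⟩ := exists_section_pullback hσ (hB a).1 (hp a).symm t.2
      exact ⟨⟨s, hs⟩, hst⟩)
    ⟨s₀, hs₀⟩
  exact ⟨fun x => (s x).1, hs, fun x => (s x).2⟩

theorem IsTreeQuiver.exists_retraction (hQ : IsTreeQuiver tl hd) {i : ∀ x, B x →ₗ[K] A x}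
    (hi : IsRepHom Ba Aa i) (hi_inj : ∀ x, Function.Injective (i x))
    (hA : ∀ a, Function.Injective (Aa a)) (hB : ∀ a, Function.Bijective (Ba a)) :
    ∃ s : ∀ x, A x →ₗ[K] B x, IsRepHom Aa Ba s ∧ ∀ x, s x ∘ₗ i x = .id := by
  obtain ⟨r⟩ := hQ.nonempty
  obtain ⟨s₀, hs₀⟩ := (i r).exists_leftInverse_of_injective (LinearMap.ker_eq_bot.2 (hi_inj r))
  obtain ⟨s, hs⟩ := hQ.exists_compatible_family
    (D := fun x => {s : A x →ₗ[K] B x // s ∘ₗ i x = .id})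
    (fun a s t => Ba a ∘ₗ s.1 = t.1 ∘ₗ Aa a)
    (fun a s => by
      obtain ⟨τ, hτ⟩ := (Aa a).exists_leftInverse_of_injective (LinearMap.ker_eq_bot.2 (hA a))
      obtain ⟨t, ht, hst⟩ := exists_retraction_pushforward hτ (hB a).2 (hi a).symm s.2
      exact ⟨⟨t, ht⟩, hst⟩)
    (fun a t => by
      obtain ⟨s, hs, hst⟩ := exists_retraction_pullback (hB a) (hi a).symm t.2
      exact ⟨⟨s, hs⟩, hst⟩)
    ⟨s₀, hs₀⟩
  exact ⟨fun x => (s x).1, hs, fun x => (s x).2⟩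

end Splitting

section ConstantRepresentation

variable {K : Type} [Field K] {Q₀ Q₁ : Type} {tl hd : Q₁ → Q₀}
  {B : Q₀ → Type} [∀ x, AddCommGroup (B x)] [∀ x, Module K (B x)]
  {Ba : ∀ a : Q₁, B (tl a) →ₗ[K] B (hd a)}

theorem IsTreeQuiver.repIso_const (hQ : IsTreeQuiver tl hd) (hB : ∀ a, Function.Bijective (Ba a))
    {W : Type} [AddCommGroup W] [Module K W] {r : Q₀} (e : B r ≃ₗ[K] W) :
    RepIso tl hd B Ba (fun _ => W) fun _ => .id := by
  let Be (a : Q₁) : B (tl a) ≃ₗ[K] B (hd a) := .ofBijective (Ba a) (hB a)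
  exact hQ.exists_compatible_family (D := fun x => B x ≃ₗ[K] W)
    (fun a d d' => ∀ v, d' (Be a v) = d v)
    (fun a d => ⟨(Be a).symm.trans d, fun v => by simp⟩)
    (fun a d' => ⟨(Be a).trans d', fun v => rfl⟩) e

theorem RepIso.exists_fin_of_finsupp [Nonempty Q₀] [∀ x, FiniteDimensional K (B x)] {ι : Type}
    (h : RepIso tl hd B Ba (fun _ => ι →₀ K) fun _ => .id) :
    ∃ n : ℕ, RepIso tl hd B Ba (fun _ => Fin n → K) fun _ => .id := by
  obtain ⟨φ, hφ⟩ := h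
  have : FiniteDimensional K (ι →₀ K) := (φ (Classical.arbitrary Q₀)).finiteDimensional
  let e := (Module.finBasis K (ι →₀ K)).equivFun
  exact ⟨_, fun x => (φ x).trans e, fun a v => congrArg e (hφ a v)⟩

end ConstantRepresentation

section Rkf

variable {K : Type} [Field K] {Q₀ Q₁ : Type} (tl hd : Q₁ → Q₀)
  (Vx : Q₀ → Type) [∀ x, AddCommGroup (Vx x)] [∀ x, Module K (Vx x)]
  (Va : ∀ a : Q₁, Vx (tl a) →ₗ[K] Vx (hd a))

/-- The arrow maps of `Γ(V)`. -/
def gammaMap (a : Q₁) : Gamma tl hd Vx Va (tl a) →ₗ[K] Gamma tl hd Vx Va (hd a) :=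
  (Va a).restrict fun _ hv => gamma_subrep tl hd Vx Va a (mem_map_of_mem hv)

/-- The projection `Γ(V) → rkf(V)`. -/
def gammaToRkf (x : Q₀) : Gamma tl hd Vx Va x →ₗ[K] rkfSpace tl hd Vx Va x :=
  (rkfDen tl hd Vx Va x).mkQ ∘ₗ inclusion le_sup_left

/-- The arrow maps of `V/Δ(V)`. -/
def modDeltaMap (a : Q₁) :
    Vx (tl a) ⧸ Delta tl hd Vx Va (tl a) →ₗ[K] Vx (hd a) ⧸ Delta tl hd Vx Va (hd a) :=
  mapQ _ _ (Va a) (map_le_iff_le_comap.1 (delta_subrep tl hd Vx Va a))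

/-- The inclusion `rkf(V) → V/Δ(V)`. -/
def rkfToModDelta (x : Q₀) : rkfSpace tl hd Vx Va x →ₗ[K] Vx x ⧸ Delta tl hd Vx Va x :=
  mapQ _ _ (GD tl hd Vx Va x).subtype le_rfl

theorem delta_coclosed : IsCoclosedSub tl hd Vx Va (Delta tl hd Vx Va) := by
  refine ⟨delta_subrep tl hd Vx Va, fun a v hv => ?_⟩
  simp only [Delta, mem_comap, mem_iInf] at hv ⊢
  exact fun N => N.2.2 a (hv N)

theorem gammaMap_surjective (a : Q₁) : Function.Surjective (gammaMap tl hd Vx Va a) := by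
  rintro ⟨w, hw⟩
  obtain ⟨v, hv, rfl⟩ := (gamma_epi tl hd Vx Va a).ge hw
  exact ⟨⟨v, hv⟩, rfl⟩

theorem modDeltaMap_injective (a : Q₁) : Function.Injective (modDeltaMap tl hd Vx Va a) :=
  LinearMap.ker_eq_bot.1 (ker_liftQ_eq_bot _ _ _ (by
    rw [LinearMap.ker_comp, ker_mkQ]
    exact (delta_coclosed tl hd Vx Va).2 a))

theorem gammaToRkf_surjective (x : Q₀) : Function.Surjective (gammaToRkf tl hd Vx Va x) := by
  intro w
  obtain ⟨⟨_, hv⟩, rfl⟩ := mkQ_surjective _ w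
  obtain ⟨g, hg, δ, hδ, rfl⟩ := mem_sup.1 hv
  refine ⟨⟨g, hg⟩, (Submodule.Quotient.eq _).2 ?_⟩
  simpa [mem_comap] using hδ

theorem rkfToModDelta_injective (x : Q₀) : Function.Injective (rkfToModDelta tl hd Vx Va x) := by
  rw [← LinearMap.ker_eq_bot, rkfToModDelta, ker_mapQ, mkQ_map_self]

theorem gammaToRkf_isRepHom :
    IsRepHom (gammaMap tl hd Vx Va) (rkfMap tl hd Vx Va) (gammaToRkf tl hd Vx Va) :=
  fun _ => rfl

theorem rkfToModDelta_isRepHom :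
    IsRepHom (rkfMap tl hd Vx Va) (modDeltaMap tl hd Vx Va) (rkfToModDelta tl hd Vx Va) :=
  fun _ => linearMap_qext _ rfl

theorem rkfMap_bijective (a : Q₁) : Function.Bijective (rkfMap tl hd Vx Va a) := by
  constructor
  · have hcomp : Function.Injective
        (modDeltaMap tl hd Vx Va a ∘ₗ rkfToModDelta tl hd Vx Va (tl a)) :=
      (modDeltaMap_injective tl hd Vx Va a).comp (rkfToModDelta_injective tl hd Vx Va _)
    rw [rkfToModDelta_isRepHom, LinearMap.coe_comp] at hcomp
    exact hcomp.of_comp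
  · have hcomp : Function.Surjective
        (gammaToRkf tl hd Vx Va (hd a) ∘ₗ gammaMap tl hd Vx Va a) :=
      (gammaToRkf_surjective tl hd Vx Va _).comp (gammaMap_surjective tl hd Vx Va a)
    rw [← gammaToRkf_isRepHom, LinearMap.coe_comp] at hcomp
    exact hcomp.of_comp

variable {tl hd}

theorem IsTreeQuiver.exists_rkf_splitting (hQ : IsTreeQuiver tl hd) :
    ∃ (ι : ∀ x : Q₀, rkfSpace tl hd Vx Va x →ₗ[K] Vx x)
      (π : ∀ x : Q₀, Vx x →ₗ[K] rkfSpace tl hd Vx Va x),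
      IsRepHom (rkfMap tl hd Vx Va) Va ι ∧ IsRepHom Va (rkfMap tl hd Vx Va) π ∧
        ∀ x, π x ∘ₗ ι x = .id := by
  obtain ⟨s, hs_hom, hs⟩ := hQ.exists_section (gammaToRkf_isRepHom tl hd Vx Va)
    (gammaToRkf_surjective tl hd Vx Va) (gammaMap_surjective tl hd Vx Va)
    (rkfMap_bijective tl hd Vx Va)
  obtain ⟨t, ht_hom, ht⟩ := hQ.exists_retraction (rkfToModDelta_isRepHom tl hd Vx Va)
    (rkfToModDelta_injective tl hd Vx Va) (modDeltaMap_injective tl hd Vx Va)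
    (rkfMap_bijective tl hd Vx Va)
  refine ⟨fun x => (Gamma tl hd Vx Va x).subtype ∘ₗ s x,
    fun x => t x ∘ₗ (Delta tl hd Vx Va x).mkQ, fun a => LinearMap.ext fun w => ?_,
    fun a => LinearMap.ext fun v => ?_, fun x => LinearMap.ext fun w => ?_⟩
  · exact congrArg Subtype.val (LinearMap.congr_fun (hs_hom a) w)
  · exact LinearMap.congr_fun (ht_hom a) (Submodule.Quotient.mk v)
  · calc t x (Submodule.Quotient.mk (s x w).1)
        = t x (rkfToModDelta tl hd Vx Va x (gammaToRkf tl hd Vx Va x (s x w))) := rfl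
      _ = t x (rkfToModDelta tl hd Vx Va x w) :=
        congrArg (fun u => t x (rkfToModDelta tl hd Vx Va x u)) (LinearMap.congr_fun (hs x) w)
      _ = w := LinearMap.congr_fun (ht x) w

end Rkf

theorem stmt_13_general {K : Type} [Field K] {Q₀ Q₁ : Type} {tl hd : Q₁ → Q₀}
    (hQ : IsTreeQuiver tl hd)
    (Vx : Q₀ → Type) [∀ x, AddCommGroup (Vx x)] [∀ x, Module K (Vx x)]
    (Va : ∀ a : Q₁, Vx (tl a) →ₗ[K] Vx (hd a)) :
    (∃ κ : Type, RepIso tl hd (rkfSpace tl hd Vx Va) (rkfMap tl hd Vx Va)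
        (fun _ => κ →₀ K) (fun _ => LinearMap.id)) ∧
    (∃ (ι : ∀ x : Q₀, rkfSpace tl hd Vx Va x →ₗ[K] Vx x)
        (π : ∀ x : Q₀, Vx x →ₗ[K] rkfSpace tl hd Vx Va x),
      (∀ (a : Q₁) (v : rkfSpace tl hd Vx Va (tl a)),
        Va a (ι (tl a) v) = ι (hd a) (rkfMap tl hd Vx Va a v)) ∧
      (∀ (a : Q₁) (v : Vx (tl a)),
        rkfMap tl hd Vx Va a (π (tl a) v) = π (hd a) (Va a v)) ∧
      (∀ (x : Q₀) (v : rkfSpace tl hd Vx Va x), π x (ι x v) = v)) := by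
  obtain ⟨r⟩ := hQ.nonempty
  let basis := Module.Basis.ofVectorSpace K (rkfSpace tl hd Vx Va r)
  obtain ⟨ι, π, hι, hπ, hπι⟩ := hQ.exists_rkf_splitting Vx Va
  exact ⟨⟨_, hQ.repIso_const (rkfMap_bijective tl hd Vx Va) basis.repr⟩, ι, π,
    fun a => LinearMap.congr_fun (hι a), fun a => LinearMap.congr_fun (hπ a),
    fun x => LinearMap.congr_fun (hπι x)⟩

/-- on a tree quiver, `rkf(V)` is isomorphic to a direct sum of copies of the
identity representation `𝟙_Q`, and `rkf(V)` is isomorphic to a direct summand of `V`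
(there are morphisms of representations `ι : rkf(V) → V` and `π : V → rkf(V)` with
`π ∘ ι = id`). -/
theorem stmt_13 {K : Type} [Field K] {Q₀ Q₁ : Type} [Fintype Q₀] [Fintype Q₁]
    (tl hd : Q₁ → Q₀)
    (hconn : ∀ x y : Q₀, Relation.ReflTransGen
      (fun u v => ∃ a : Q₁, (tl a = u ∧ hd a = v) ∨ (hd a = u ∧ tl a = v)) x y)
    (htree : Fintype.card Q₀ = Fintype.card Q₁ + 1)
    (Vx : Q₀ → Type) [∀ x, AddCommGroup (Vx x)] [∀ x, Module K (Vx x)]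
    [∀ x, FiniteDimensional K (Vx x)]
    (Va : ∀ a : Q₁, Vx (tl a) →ₗ[K] Vx (hd a)) :
    (∃ n : ℕ, RepIso tl hd (rkfSpace tl hd Vx Va) (rkfMap tl hd Vx Va)
        (fun _ => Fin n → K) (fun _ => LinearMap.id)) ∧
    (∃ (ι : ∀ x : Q₀, rkfSpace tl hd Vx Va x →ₗ[K] Vx x)
        (π : ∀ x : Q₀, Vx x →ₗ[K] rkfSpace tl hd Vx Va x),
      (∀ (a : Q₁) (v : rkfSpace tl hd Vx Va (tl a)),
        Va a (ι (tl a) v) = ι (hd a) (rkfMap tl hd Vx Va a v)) ∧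
      (∀ (a : Q₁) (v : Vx (tl a)),
        rkfMap tl hd Vx Va a (π (tl a) v) = π (hd a) (Va a v)) ∧
      (∀ (x : Q₀) (v : rkfSpace tl hd Vx Va x), π x (ι x v) = v)) := by
  have hQ : IsTreeQuiver tl hd := .of_card hconn htree
  have := hQ.nonempty
  exact (stmt_13_general hQ Vx Va).imp_left fun ⟨_, hκ⟩ => hκ.exists_fin_of_finsupp
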